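/- arXiv:2505.04292 — 2 statements merged into one kernel-verified Lean document; each statement's English description precedes it below -/
import Mathlib

section
/- Let Y and Z be path-connected topological spaces and let f : Y → Z be a continuous map that induces an isomorphism f_* : π₁(Y,y₀) → π₁(Z,f(y₀)) on fundamental groups. Let F be a family of subgroups of π₁(Z,f(y₀)) and let f_*^{-1}(F) be the family of subgroups H of π₁(Y,y₀) with f_*(H) ∈ F. Then cat_{f_*^{-1}(F)}(Y) ≤ cat_F(Z). -/
open scoped Topology
open CategoryTheory

noncomputable section

/-- A *family of subgroups* of a group `G`: a non-empty set of subgroups that is closed under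
conjugation and under passing to subgroups. -/
structure IsSubgroupFamily {G : Type} [Group G] (F : Set (Subgroup G)) : Prop where
  nonempty : F.Nonempty
  conj_mem : ∀ H ∈ F, ∀ g : G, H.map (MulAut.conj g).toMonoidHom ∈ F
  mem_of_le : ∀ H ∈ F, ∀ K : Subgroup G, K ≤ H → K ∈ F

/-- The restriction `F|_H = {F ⊆ H : F ∈ F}` of a family of subgroups of `G` to a subgroup `H`,
viewed as a set of subgroups of `H`. -/
def restrictFamily {G : Type} [Group G] (F : Set (Subgroup G)) (H : Subgroup G) :
    Set (Subgroup H) :=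
  {K : Subgroup H | K.map H.subtype ∈ F}

attribute [local instance] Path.Homotopic.setoid

/-- The element of the fundamental group determined by a homotopy class of loops. -/
def pathToPi1 {Y : Type} [TopologicalSpace Y] {y : Y} (p : Path.Homotopic.Quotient y y) :
    FundamentalGroup Y y :=
  FundamentalGroup.fromPath (X := TopCat.of Y) p

/-- The homomorphism induced by a continuous map on fundamental groups. -/
def piOneMap {Y Z : Type} [TopologicalSpace Y] [TopologicalSpace Z] (f : C(Y, Z)) (y₀ : Y) :
    FundamentalGroup Y y₀ →* FundamentalGroup Z (f y₀) :=
  Functor.mapEnd (X := FundamentalGroupoid.mk (X := TopCat.of Y) y₀)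
    (FundamentalGroupoid.fundamentalGroupoidFunctor.map
      (show TopCat.of Y ⟶ TopCat.of Z from TopCat.ofHom f))

/-- The condition on a member `U` of an open cover realising `cat_F`: for every `y ∈ U`, the
image of `π₁(U, y) → π₁(Y, y)`, transported to the basepoint `y₀` along any path and compared
with `F` via the identification `e`, is contained in a member of `F`.  (For a subgroup-closed
family `F` this says exactly that the image subgroup belongs to `F`; for a conjugation-closed
family the condition is independent of the chosen path.) -/
def FCoverCondition {Y : Type} [TopologicalSpace Y] {G : Type} [Group G] (y₀ : Y)
    (e : FundamentalGroup Y y₀ ≃* G) (F : Set (Subgroup G)) (U : Set Y) : Prop :=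
  ∀ y ∈ U, ∀ q : Path y₀ y, ∃ H ∈ F, ∀ p : Path y y, (∀ t, p t ∈ U) →
    e (pathToPi1 (Path.Homotopic.Quotient.trans ⟦q⟧
      (Path.Homotopic.Quotient.trans ⟦p⟧ ⟦q.symm⟧))) ∈ H

/-- `cat_F(Y)` for a space `Y`, with respect to an identification `e : π₁(Y, y₀) ≅ G` and a set
`F` of subgroups of `G`: the infimum of all `n` such that `Y` admits a cover by `n + 1` open
subsets whose `π₁`-images lie in `F`. -/
def catSpace {Y : Type} [TopologicalSpace Y] {G : Type} [Group G] (y₀ : Y)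
    (e : FundamentalGroup Y y₀ ≃* G) (F : Set (Subgroup G)) : ℕ∞ :=
  sInf {c : ℕ∞ | ∃ n : ℕ, c = (n : ℕ∞) ∧ ∃ U : Fin (n + 1) → Set Y,
    (∀ i, IsOpen (U i)) ∧ (∀ y : Y, ∃ i, y ∈ U i) ∧ ∀ i, FCoverCondition y₀ e F (U i)}

/-! An open cover of `Z` pulls back along `f` to an open cover of `Y`. If the loops in `U`, based
through a path `f ∘ q`, have classes in `H ∈ F`, then the loops in `f ⁻¹' U`, based through `q`,
have classes in `f_*⁻¹(H)`, and `f_*(f_*⁻¹(H)) ≤ H` lies in `F` because `F` is closed under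
subgroups. -/

theorem IsSubgroupFamily.isLowerSet {G : Type} [Group G] {F : Set (Subgroup G)}
    (hF : IsSubgroupFamily F) : IsLowerSet F :=
  fun H K hKH hH => hF.mem_of_le H hH K hKH

section PathClasses

variable {Y Z : Type*} [TopologicalSpace Y] [TopologicalSpace Z] (f : C(Y, Z)) {x y z : Y}

theorem pathQuotient_map_trans (P : Path.Homotopic.Quotient x y)
    (Q : Path.Homotopic.Quotient y z) : (P.trans Q).map f = (P.map f).trans (Q.map f) :=
  (FundamentalGroupoid.map f).map_comp (X := ⟨x⟩) (Y := ⟨y⟩) (Z := ⟨z⟩) P Q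

theorem pathQuotient_map_symm (P : Path.Homotopic.Quotient x y) :
    P.symm.map f = (P.map f).symm := by
  induction P with | mk p => rfl

end PathClasses

section LoopTransport

variable {Y Z : Type} [TopologicalSpace Y] [TopologicalSpace Z] {y₀ y : Y}

/-- The change of basepoint `π₁(Y, y) → π₁(Y, y₀)`, `[p] ↦ [q · p · q⁻¹]`, along a path `q` from
`y₀` to `y`. Both arguments are path classes, since that is how `FCoverCondition` presents loops. -/
def transportLoop (Q : Path.Homotopic.Quotient y₀ y) (P : Path.Homotopic.Quotient y y) :
    FundamentalGroup Y y₀ :=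
  pathToPi1 (Q.trans (P.trans Q.symm))

theorem piOneMap_pathToPi1 (f : C(Y, Z)) (P : Path.Homotopic.Quotient y y) :
    piOneMap f y (pathToPi1 P) = pathToPi1 (P.map f) :=
  rfl

theorem piOneMap_transportLoop (f : C(Y, Z)) (Q : Path.Homotopic.Quotient y₀ y)
    (P : Path.Homotopic.Quotient y y) :
    piOneMap f y₀ (transportLoop Q P) = transportLoop (Q.map f) (P.map f) := by
  simp only [transportLoop, piOneMap_pathToPi1, pathQuotient_map_trans, pathQuotient_map_symm]

theorem fCoverCondition_iff_transportLoop_mem {G : Type} [Group G]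
    {e : FundamentalGroup Y y₀ ≃* G} {F : Set (Subgroup G)} {U : Set Y} :
    FCoverCondition y₀ e F U ↔ ∀ y ∈ U, ∀ q : Path y₀ y, ∃ H ∈ F, ∀ p : Path y y,
      (∀ t, p t ∈ U) → e (transportLoop (.mk q) (.mk p)) ∈ H :=
  Iff.rfl

end LoopTransport

section CoverPullback

variable {Y Z G K : Type} [TopologicalSpace Y] [TopologicalSpace Z] [Group G] [Group K]
  (f : C(Y, Z)) {y₀ : Y} {e : FundamentalGroup Y y₀ ≃* G}

theorem FCoverCondition.preimage {e' : FundamentalGroup Z (f y₀) ≃* K} {φ : G →* K}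
    (hφ : ∀ γ, φ (e γ) = e' (piOneMap f y₀ γ)) {F : Set (Subgroup K)} (hF : IsLowerSet F)
    {U : Set Z} (hU : FCoverCondition (f y₀) e' F U) :
    FCoverCondition y₀ e {H | H.map φ ∈ F} (f ⁻¹' U) := by
  rw [fCoverCondition_iff_transportLoop_mem] at hU ⊢
  intro y hy q
  obtain ⟨H, hH, hloops⟩ := hU (f y) hy (q.map f.continuous)
  refine ⟨H.comap φ, hF (Subgroup.map_comap_le φ H) hH, fun p hp => ?_⟩
  rw [Subgroup.mem_comap, hφ, piOneMap_transportLoop]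
  exact hloops (p.map f.continuous) hp

theorem catSpace_le_catSpace_of_preimage {z₀ : Z} {e' : FundamentalGroup Z z₀ ≃* K}
    {F : Set (Subgroup G)} {F' : Set (Subgroup K)}
    (h : ∀ U, IsOpen U → FCoverCondition z₀ e' F' U → FCoverCondition y₀ e F (f ⁻¹' U)) :
    catSpace y₀ e F ≤ catSpace z₀ e' F' := by
  refine sInf_le_sInf ?_
  rintro _ ⟨n, rfl, U, hU_open, hU_cover, hU⟩
  exact ⟨n, rfl, fun i => f ⁻¹' U i, fun i => (hU_open i).preimage f.continuous,
    fun y => hU_cover (f y), fun i => h (U i) (hU_open i) (hU i)⟩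

theorem catF_le_of_pi1_iso_general {e' : FundamentalGroup Z (f y₀) ≃* K} {φ : G →* K}
    (hφ : ∀ γ, φ (e γ) = e' (piOneMap f y₀ γ)) {F : Set (Subgroup K)} (hF : IsLowerSet F) :
    catSpace y₀ e {H | H.map φ ∈ F} ≤ catSpace (f y₀) e' F :=
  catSpace_le_catSpace_of_preimage f fun _ _ hU => hU.preimage f hφ hF

end CoverPullback

/-- **Monotonicity of `cat_F` under `π₁`-isomorphisms.**
Let `f : Y → Z` be a continuous map of path-connected spaces inducing an isomorphism on
fundamental groups, let `F` be a family of subgroups of `π₁(Z, f y₀)`, and let `f_*⁻¹(F)` be the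
family of subgroups `H` of `π₁(Y, y₀)` with `f_*(H) ∈ F`.  Then
`cat_{f_*⁻¹(F)}(Y) ≤ cat_F(Z)`. -/
theorem catF_le_of_pi1_iso (Y Z : Type) [TopologicalSpace Y] [TopologicalSpace Z]
    [PathConnectedSpace Y] [PathConnectedSpace Z] (f : C(Y, Z)) (y₀ : Y)
    (hf : Function.Bijective (piOneMap f y₀))
    (F : Set (Subgroup (FundamentalGroup Z (f y₀)))) (hF : IsSubgroupFamily F) :
    catSpace y₀ (MulEquiv.refl (FundamentalGroup Y y₀))
        {H : Subgroup (FundamentalGroup Y y₀) | H.map (piOneMap f y₀) ∈ F} ≤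
      catSpace (f y₀) (MulEquiv.refl (FundamentalGroup Z (f y₀))) F :=
  catF_le_of_pi1_iso_general f (fun _ => rfl) hF.isLowerSet

end
end

section
/- In the gluing setup, suppose that S_i^± is π₁-injective in M_{j^±(i)} for all i ∈ {1,…,l}. Then cat_Am(M) ≤ max_{j∈{1,…,k}} cat_Am(M_j) + max_{i∈{1,…,l}} ( cat_Am(S_i⁺) + 1 ). -/
open scoped Topology
open CategoryTheory

noncomputable section

/-- The closed unit disk `Dⁿ ⊆ ℝⁿ`. -/
def UnitDisk (n : ℕ) : Set (EuclideanSpace ℝ (Fin n)) := Metric.closedBall 0 1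

/-- The unit sphere `Sⁿ⁻¹ ⊆ ℝⁿ` (the boundary of `Dⁿ`). -/
def UnitSphere (n : ℕ) : Set (EuclideanSpace ℝ (Fin n)) := Metric.sphere 0 1

/-- A CW-structure on a topological space (the non-equivariant case of a `G`-CW-structure). -/
structure CWStructure (X : Type) [TopologicalSpace X] : Type 1 where
  t2 : T2Space X
  cells : ℕ → Type
  charMap : ∀ n, cells n → UnitDisk n → X
  charMap_continuous : ∀ n i, Continuous (charMap n i)
  sphere_le : ∀ n i (z : UnitDisk n), ‖(z : EuclideanSpace ℝ (Fin n))‖ = 1 →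
    ∃ (m : ℕ) (_ : m < n) (j : cells m) (w : UnitDisk m),
      ‖(w : EuclideanSpace ℝ (Fin m))‖ < 1 ∧ charMap m j w = charMap n i z
  partition : ∀ x : X, ∃! p : Σ (n : ℕ) (_ : cells n), UnitDisk n,
      ‖(p.2.2 : EuclideanSpace ℝ (Fin p.1))‖ < 1 ∧ charMap p.1 p.2.1 p.2.2 = x
  weak_topology : ∀ A : Set X, IsClosed A ↔ ∀ n i, IsClosed (charMap n i ⁻¹' A)

/-- The CW-complex has dimension at most `c`. -/
def CWStructure.DimLE {X : Type} [TopologicalSpace X] (C : CWStructure X) (c : ℕ∞) : Prop :=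
  ∀ n : ℕ, c < (n : ℕ∞) → IsEmpty (C.cells n)

/-- A CW-model of the classifying space `BG`: an aspherical path-connected CW-complex with
fundamental group isomorphic to `G`. -/
structure ClassifyingModel (G : Type) [Group G] : Type 1 where
  space : Type
  [topology : TopologicalSpace space]
  cw : CWStructure space
  pathConnected : PathConnectedSpace space
  basepoint : space
  /-- all higher homotopy groups vanish -/
  aspherical : ∀ n : ℕ, 2 ≤ n → Subsingleton (HomotopyGroup.Pi n space basepoint)
  iso : FundamentalGroup space basepoint ≃* G

attribute [instance] ClassifyingModel.topology

/-- The geometric dimension of `G`: the infimum of the dimensions of CW-models of `BG`. -/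
def gd (G : Type) [Group G] : ℕ∞ :=
  sInf {c : ℕ∞ | ∃ Y : ClassifyingModel G, Y.cw.DimLE c}

attribute [local instance] Path.Homotopic.setoid

/-- A left-invariant finitely additive probability measure defined on all subsets of `G`. -/
structure InvariantMean (G : Type) [Group G] where
  meas : Set G → ℝ
  nonneg : ∀ A : Set G, 0 ≤ meas A
  total : meas Set.univ = 1
  additive : ∀ A B : Set G, Disjoint A B → meas (A ∪ B) = meas A + meas B
  invariant : ∀ (g : G) (A : Set G), meas ((g * ·) '' A) = meas A

/-- A group is amenable if it admits a left-invariant mean. -/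
def IsAmenable (G : Type) [Group G] : Prop := Nonempty (InvariantMean G)

/-- The condition on a member `U` of an amenable open cover: for every `y ∈ U`, the image of
`π₁(U, y) → π₁(Y, y)` is contained in an amenable subgroup. -/
def AmenableCoverCondition {Y : Type} [TopologicalSpace Y] (U : Set Y) : Prop :=
  ∀ y ∈ U, ∃ H : Subgroup (FundamentalGroup Y y), IsAmenable H ∧
    ∀ p : Path y y, (∀ t, p t ∈ U) → pathToPi1 ⟦p⟧ ∈ H

/-- The amenable category `cat_Am(Y)` of a space `Y`: the infimum of all `n` such that `Y`
admits a cover by `n + 1` amenable open subsets. -/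
def amCat (Y : Type) [TopologicalSpace Y] : ℕ∞ :=
  sInf {c : ℕ∞ | ∃ n : ℕ, c = (n : ℕ∞) ∧ ∃ U : Fin (n + 1) → Set Y,
    (∀ i, IsOpen (U i)) ∧ (∀ y : Y, ∃ i, y ∈ U i) ∧ ∀ i, AmenableCoverCondition (U i)}

/-- The amenable category of a group: `cat_Am(G) := cat_Am(BG)`. -/
def amCatGroup (G : Type) [Group G] : ℕ∞ :=
  sInf {c : ℕ∞ | ∃ Y : ClassifyingModel G, c = amCat Y.space}

/-- A subspace `S ⊆ X` is `π₁`-injective if for every basepoint in `S` the inclusion induces an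
injective map on fundamental groups, i.e. loops in `S` that are homotopic in `X` are already
homotopic in `S`. -/
def Pi1Injective {X : Type} [TopologicalSpace X] (S : Set X) : Prop :=
  ∀ (x : S) (p q : Path x x),
    (p.map continuous_subtype_val).Homotopic (q.map continuous_subtype_val) → p.Homotopic q

/-- The image of `π₁(S, x) → π₁(X, x)` (as a subset of the fundamental group of `X`). -/
def loopImageSet {X : Type} [TopologicalSpace X] (S : Set X) (x : X) :
    Set (FundamentalGroup X x) :=
  {g | ∃ p : Path x x, (∀ t, p t ∈ S) ∧ g = pathToPi1 ⟦p⟧}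

/-- The standard topological `n`-simplex. -/
def TopSimplex (n : ℕ) : Set (Fin (n + 1) → ℝ) := stdSimplex ℝ (Fin (n + 1))

/-- Singular `n`-chains on `X` with coefficients in `R`: finitely supported functions on the
set of singular `n`-simplices. -/
abbrev SingularChain (R : Type) [CommRing R] (X : Type) [TopologicalSpace X] (n : ℕ) :=
  C(TopSimplex n, X) →₀ R

/-- The `i`-th face inclusion of standard simplices. -/
def faceMap (n : ℕ) (i : Fin (n + 2)) : C(TopSimplex n, TopSimplex (n + 1)) where
  toFun x := ⟨fun j => ∑ k : Fin (n + 1), if i.succAbove k = j then (x : Fin (n + 1) → ℝ) k else 0,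
    by
      refine ⟨fun j => Finset.sum_nonneg fun k _ => ?_, ?_⟩
      · by_cases h : i.succAbove k = j
        · simpa [h] using x.2.1 k
        · simp [h]
      · rw [Finset.sum_comm]
        simp only [Finset.sum_ite_eq, Finset.mem_univ, if_true]
        exact x.2.2⟩
  continuous_toFun := by
    apply Continuous.subtype_mk
    apply continuous_pi
    intro j
    apply continuous_finset_sum
    intro k _
    by_cases h : i.succAbove k = j
    · simp only [h, if_true]
      exact (continuous_apply k).comp continuous_subtype_val
    · simpa [h] using continuous_const

variable {R : Type} [CommRing R] {X Y : Type} [TopologicalSpace X] [TopologicalSpace Y]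

/-- The boundary operator on singular chains. -/
def chainBoundary {n : ℕ} (c : SingularChain R X (n + 1)) : SingularChain R X n :=
  c.sum fun σ r =>
    ∑ i : Fin (n + 2), (r * (-1) ^ (i : ℕ)) • Finsupp.single (σ.comp (faceMap n i)) (1 : R)

/-- The boundary operator, lowering the degree by one (with `∂ = 0` in degree `0`). -/
def chainBoundaryFrom : ∀ n, SingularChain R X n → SingularChain R X (n - 1)
  | 0, _ => 0
  | _ + 1, c => chainBoundary c

/-- The pushforward of singular chains along a continuous map. -/
def chainMap (f : C(X, Y)) {n : ℕ} (c : SingularChain R X n) : SingularChain R Y n :=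
  c.sum fun σ r => Finsupp.single (f.comp σ) r

/-- The inclusion of a subspace as a continuous map. -/
def subInc {X : Type} [TopologicalSpace X] (A : Set X) : C(A, X) :=
  ⟨Subtype.val, continuous_subtype_val⟩

/-- The chains on `X` supported on the subspace `A`. -/
def chainsOn (A : Set X) (n : ℕ) : Set (SingularChain R X n) :=
  Set.range fun c : SingularChain R A n => chainMap (subInc A) c

/-- A relative `n`-cycle of `(X, A)`. -/
def IsRelCycle (A : Set X) : ∀ n, SingularChain R X n → Prop
  | 0, _ => True
  | n + 1, c => chainBoundary c ∈ chainsOn A n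

/-- Two relative `n`-cycles define the same class in `H_n(X, A; R)`. -/
def RelHomologous (A : Set X) (n : ℕ) (c d : SingularChain R X n) : Prop :=
  ∃ b : SingularChain R X (n + 1), ∃ a ∈ chainsOn (R := R) A n, c - d = chainBoundary b + a

/-- The `ℓ¹`-norm `|c|₁ = ∑_σ |a_σ|` of a real singular chain `c = ∑_σ a_σ · σ`. -/
def chainNorm {n : ℕ} (c : SingularChain ℝ X n) : ℝ :=
  c.sum fun _ r => |r|

/-- Extension of coefficients `ℤ → ℝ` on singular chains. -/
def chainExt {n : ℕ} (c : SingularChain ℤ X n) : SingularChain ℝ X n :=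
  Finsupp.mapRange (fun k : ℤ => (k : ℝ)) (by norm_num) c

/-- The halfspace `{x : ℝⁿ | x₀ ≥ 0}` (all of `ℝ⁰` for `n = 0`). -/
def HalfSpace (n : ℕ) : Set (Fin n → ℝ) := {x | ∀ h : 0 < n, 0 ≤ x ⟨0, h⟩}

/-- The boundary `{x₀ = 0}` of the halfspace. -/
def HalfSpaceBoundary (n : ℕ) : Set (Fin n → ℝ) := {x | ∃ h : 0 < n, x ⟨0, h⟩ = 0}

/-- An oriented compact connected topological `n`-manifold with (possibly empty) boundary.
The orientation is recorded by an integral relative fundamental cycle `fundClass`, i.e. a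
relative cycle whose class generates `H_n(M, ∂M; ℤ) ≅ ℤ` (for a compact connected `n`-manifold,
such a generator exists if and only if the manifold is orientable, and the choice of generator
is exactly the choice of orientation). -/
structure OCCManifold (n : ℕ) : Type 1 where
  carrier : Type
  [topology : TopologicalSpace carrier]
  boundary : Set carrier
  t2 : T2Space carrier
  compact : CompactSpace carrier
  connected : ConnectedSpace carrier
  /-- every point has a halfspace chart, which detects the boundary -/
  charts : ∀ x : carrier, ∃ (U : Set carrier) (V : Set (HalfSpace n)) (φ : U ≃ₜ V),
    x ∈ U ∧ IsOpen U ∧ IsOpen V ∧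
    ∀ y : U, ((y : carrier) ∈ boundary ↔
      ((φ y : HalfSpace n) : Fin n → ℝ) ∈ HalfSpaceBoundary n)
  fundClass : SingularChain ℤ carrier n
  fundClass_cycle : IsRelCycle boundary n fundClass
  fundClass_gen : ∀ c : SingularChain ℤ carrier n, IsRelCycle boundary n c →
    ∃ k : ℤ, RelHomologous boundary n c (k • fundClass)
  fundClass_ord : ∀ k : ℤ, RelHomologous boundary n (k • fundClass) 0 → k = 0

attribute [instance] OCCManifold.topology

/-- A real relative fundamental cycle of `(M, ∂M)`: a real relative cycle representing the image
of the integral fundamental class under the change of coefficients `ℤ → ℝ`. -/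
def IsFundamentalCycle {n : ℕ} (M : OCCManifold n) (c : SingularChain ℝ M.carrier n) : Prop :=
  IsRelCycle M.boundary n c ∧ RelHomologous M.boundary n c (chainExt M.fundClass)

/-- The (relative) simplicial volume `‖M, ∂M‖`: the infimum of the `ℓ¹`-norms of the real
relative fundamental cycles of `(M, ∂M)`.  For closed `M` this is the simplicial volume `‖M‖`. -/
def simVol {n : ℕ} (M : OCCManifold n) : ℝ :=
  sInf {r : ℝ | ∃ c : SingularChain ℝ M.carrier n, IsFundamentalCycle M c ∧ r = chainNorm c}

/-- `S` is a boundary component of `M`, i.e. a connected component of `∂M`. -/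
def IsBoundaryComponent {n : ℕ} (M : OCCManifold n) (S : Set M.carrier) : Prop :=
  ∃ x ∈ M.boundary, S = connectedComponentIn M.boundary x

open scoped Classical in
/-- `z` is a fundamental cycle for the induced orientation on the part `S` of the boundary of
`M`: a cycle on `S` which, pushed into `M`, is the part of `∂(fundClass)` supported on `S`. -/
def IsInducedBoundaryCycle {n : ℕ} (M : OCCManifold n) (S : Set M.carrier)
    (z : SingularChain ℤ S (n - 1)) : Prop :=
  IsRelCycle (∅ : Set S) (n - 1) z ∧
    chainMap (subInc S) z =
      (chainBoundaryFrom n M.fundClass).filter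
        (fun σ : C(TopSimplex (n - 1), M.carrier) => ∀ t, σ t ∈ S)

/-- `h` carries the induced orientation of `S ⊆ ∂M` to `sign` times the induced orientation of
`T ⊆ ∂N`: with `sign = 1` this says that `h` is orientation-preserving, and with `sign = -1`
that `h` is orientation-reversing. -/
def OrientationCompatible {n : ℕ} (sign : ℤ) (M N : OCCManifold n)
    {S : Set M.carrier} {T : Set N.carrier} (h : S ≃ₜ T) : Prop :=
  ∀ z w, IsInducedBoundaryCycle M S z → IsInducedBoundaryCycle N T w →
    RelHomologous (∅ : Set T) (n - 1)
      (chainMap ⟨h, h.continuous_toFun⟩ z) (sign • w)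

/-- The setup of Theorem 3.4: oriented compact connected `n`-manifolds `M₁, …, M_k` glued along
pairings `(Sᵢ⁺, Sᵢ⁻)` of boundary components via orientation-reversing homeomorphisms `fᵢ`,
yielding a connected oriented compact `n`-manifold `glued`.  The map from the disjoint union of
the pieces to `glued` is a quotient map that identifies exactly the points related by the
gluing homeomorphisms. -/
structure GluingSetup (n k l : ℕ) : Type 1 where
  pieces : Fin k → OCCManifold n
  jp : Fin l → Fin k
  jm : Fin l → Fin k
  Sp : ∀ i : Fin l, Set (pieces (jp i)).carrier
  Sm : ∀ i : Fin l, Set (pieces (jm i)).carrier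
  Sp_comp : ∀ i, IsBoundaryComponent (pieces (jp i)) (Sp i)
  Sm_comp : ∀ i, IsBoundaryComponent (pieces (jm i)) (Sm i)
  /-- every boundary component occurs at most once among the `Sᵢ^±` -/
  distinct : Function.Injective
    (Sum.elim (fun i : Fin l => (⟨jp i, Sp i⟩ : Σ j : Fin k, Set (pieces j).carrier))
              (fun i : Fin l => (⟨jm i, Sm i⟩ : Σ j : Fin k, Set (pieces j).carrier)))
  glueHomeo : ∀ i : Fin l, Sp i ≃ₜ Sm i
  glue_or_rev : ∀ i, OrientationCompatible (-1) (pieces (jp i)) (pieces (jm i)) (glueHomeo i)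
  glued : OCCManifold n
  emb : ∀ j : Fin k, C((pieces j).carrier, glued.carrier)
  quotient : Topology.IsQuotientMap fun p : Σ j : Fin k, (pieces j).carrier => emb p.1 p.2
  identifications : ∀ a b : Σ j : Fin k, (pieces j).carrier,
    emb a.1 a.2 = emb b.1 b.2 ↔
      Relation.EqvGen (fun p q : Σ j : Fin k, (pieces j).carrier =>
        ∃ (i : Fin l) (x : Sp i),
          p = ⟨jp i, (x : (pieces (jp i)).carrier)⟩ ∧
          q = ⟨jm i, ((glueHomeo i x : Sm i) : (pieces (jm i)).carrier)⟩) a b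
  boundary_eq : glued.boundary =
    {y : glued.carrier | ∃ p : Σ j : Fin k, (pieces j).carrier,
      emb p.1 p.2 = y ∧ p.2 ∈ (pieces p.1).boundary ∧
      ¬ ((∃ (i : Fin l) (x : Sp i), p = ⟨jp i, (x : (pieces (jp i)).carrier)⟩) ∨
         (∃ (i : Fin l) (x : Sm i), p = ⟨jm i, (x : (pieces (jm i)).carrier)⟩))}


/-!
Let `E` be the hypersurface of the glued manifold along which the pieces are glued. Quotients of
amenable groups are amenable, so a cover of the pieces by amenable open sets stays amenable when it
is restricted to the complement of the glued boundary components and mapped into the glued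
manifold. Sets from different pieces may be joined, because a loop stays in one piece. This covers
the complement of `E` by `max cat_Am(M_j) + 1` sets.

In a half-ball chart the boundary is pushed into from nearby, fixing the boundary and everything
outside a compact set. By compactness finitely many such pushes compose to a homotopy carrying a
neighbourhood of the glued boundary components into them. It descends to the glued manifold, where
amenable covers of the components `Sᵢ⁺` can be pulled back along it to cover `E` by
`max (cat_Am(Sᵢ⁺) + 1)` sets.
-/

section Amenable

theorem IsAmenable.of_surjective {G H : Type} [Group G] [Group H] {φ : G →* H}
    (hφ : Function.Surjective φ) (hG : IsAmenable G) : IsAmenable H := by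
  obtain ⟨m⟩ := hG
  refine ⟨⟨fun A => m.meas (φ ⁻¹' A), fun A => m.nonneg _, m.total,
    fun A B h => m.additive _ _ (h.preimage φ), fun h A => ?_⟩⟩
  obtain ⟨g, rfl⟩ := hφ h
  have preimage_translate : φ ⁻¹' ((φ g * ·) '' A) = (g * ·) '' (φ ⁻¹' A) := by
    ext x
    simp [Set.image_mul_left]
  rw [preimage_translate, m.invariant]

theorem IsAmenable.map {G H : Type} [Group G] [Group H] (φ : G →* H) {K : Subgroup G}
    (hK : IsAmenable K) : IsAmenable (K.map φ) :=
  hK.of_surjective (φ.subgroupMap_surjective K)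

namespace AmenableCoverCondition

theorem mono {U V : Set Y} (hV : AmenableCoverCondition V) (hUV : U ⊆ V) :
    AmenableCoverCondition U := by
  intro y hy
  obtain ⟨K, hK, hloops⟩ := hV y (hUV hy)
  exact ⟨K, hK, fun p hp => hloops p fun t => hUV (hp t)⟩

protected theorem empty : AmenableCoverCondition (∅ : Set Y) :=
  fun _ hy => hy.elim

theorem image (f : C(X, Y)) {V : Set X} (hf : Topology.IsEmbedding (V.domRestrict f))
    (hV : AmenableCoverCondition V) : AmenableCoverCondition (f '' V) := by
  rintro _ ⟨x, hx, rfl⟩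
  obtain ⟨K, hK, hloops⟩ := hV x hx
  refine ⟨K.map (FundamentalGroup.map f x), hK.map _, fun p hp => ?_⟩
  choose δ hδV hδ using hp
  have lift_continuous : Continuous fun t => (⟨δ t, hδV t⟩ : V) :=
    hf.continuous_iff.2 (by simpa only [Function.comp_def, Set.domRestrict_apply, hδ] using
      p.continuous)
  have lift_endpoint (t) (ht : p t = f x) : δ t = x :=
    congrArg Subtype.val (hf.injective (a₁ := ⟨δ t, hδV t⟩) (a₂ := ⟨x, hx⟩) ((hδ t).trans ht))
  let q : Path x x := ⟨⟨δ, continuous_subtype_val.comp lift_continuous⟩,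
    lift_endpoint 0 p.source, lift_endpoint 1 p.target⟩
  have map_lift : q.map f.continuous = p := Path.ext (funext hδ)
  exact ⟨pathToPi1 ⟦q⟧, hloops q hδV, by rw [← map_lift]; rfl⟩

theorem sigma {ι : Type} {A : ι → Type} [∀ i, TopologicalSpace (A i)] {V : Set (Σ i, A i)}
    (hV : ∀ i, AmenableCoverCondition (Sigma.mk i ⁻¹' V)) : AmenableCoverCondition V := by
  rintro ⟨i, x⟩ hx
  obtain ⟨K, hK, hloops⟩ := hV i x hx
  refine ⟨K.map (FundamentalGroup.map (ContinuousMap.sigmaMk i) x), hK.map _, fun p hp => ?_⟩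
  obtain ⟨j, δ, hδ, hp_eq⟩ := p.continuous.exists_lift_sigma
  have lift (t) : p t = ⟨j, δ t⟩ := congrFun hp_eq t
  obtain ⟨rfl, source⟩ := Sigma.mk.inj_iff.1 ((lift 0).symm.trans p.source)
  obtain ⟨-, target⟩ := Sigma.mk.inj_iff.1 ((lift 1).symm.trans p.target)
  let q : Path x x := ⟨⟨δ, hδ⟩, eq_of_heq source, eq_of_heq target⟩
  have map_lift : q.map (ContinuousMap.sigmaMk j).continuous = p :=
    Path.ext (funext fun t => (lift t).symm)
  exact ⟨pathToPi1 ⟦q⟧, hloops q fun t => by have := hp t; rwa [lift t] at this,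
    by rw [← map_lift]; rfl⟩

theorem of_homotopic_id {g : C(Y, Y)} (hg : (ContinuousMap.id Y).Homotopic g) {V W : Set Y}
    (hV : AmenableCoverCondition V) (hWV : Set.MapsTo g W V) : AmenableCoverCondition W := by
  intro y hy
  obtain ⟨K, hK, hloops⟩ := hV (g y) (hWV hy)
  obtain ⟨H⟩ := hg
  let φ := FundamentalGroup.fundamentalGroupMulEquivOfPath (H.evalAt y)
  have transport (p : Path y y) : φ (pathToPi1 ⟦p⟧) = pathToPi1 ⟦p.map g.continuous⟧ := by
    simp only [φ, FundamentalGroup.fundamentalGroupMulEquivOfPath]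
    rw [Iso.conj_apply, Iso.inv_comp_eq]
    exact Quotient.sound (Path.Homotopic.map_trans_evalAt H p)
  refine ⟨K.map φ.symm.toMonoidHom, hK.map _, fun p hp => Subgroup.mem_map_equiv.2 ?_⟩
  change φ (pathToPi1 ⟦p⟧) ∈ K
  rw [transport]
  exact hloops _ fun t => hWV (hp t)

end AmenableCoverCondition

end Amenable

/-- `A` is covered by `N` open subsets of the ambient space `Y` that are amenable in `Y`. Covers of
a subset are allowed so that covers of the parts of a decomposition of `Y` can be added up. -/
def HasAmenableCover (A : Set Y) (N : ℕ) : Prop :=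
  ∃ U : Fin N → Set Y, (∀ i, IsOpen (U i)) ∧ (∀ y ∈ A, ∃ i, y ∈ U i) ∧
    ∀ i, AmenableCoverCondition (U i)

namespace HasAmenableCover

theorem union {A B : Set Y} {M N : ℕ} (hA : HasAmenableCover A M) (hB : HasAmenableCover B N) :
    HasAmenableCover (A ∪ B) (M + N) := by
  obtain ⟨U, U_open, U_cover, U_amenable⟩ := hA
  obtain ⟨V, V_open, V_cover, V_amenable⟩ := hB
  refine ⟨Fin.append U V, ?_, ?_, ?_⟩
  · simpa [Fin.forall_fin_add] using ⟨U_open, V_open⟩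
  · rintro y (hy | hy)
    · obtain ⟨i, hi⟩ := U_cover y hy
      exact ⟨i.castAdd N, by rwa [Fin.append_left]⟩
    · obtain ⟨i, hi⟩ := V_cover y hy
      exact ⟨i.natAdd M, by rwa [Fin.append_right]⟩
  · simpa [Fin.forall_fin_add] using ⟨U_amenable, V_amenable⟩

theorem mono {A : Set Y} {M N : ℕ} (hA : HasAmenableCover A M) (hMN : M ≤ N) :
    HasAmenableCover A N := by
  have empty_cover : HasAmenableCover (∅ : Set Y) (N - M) :=
    ⟨fun _ => ∅, fun _ => isOpen_empty, fun _ h => h.elim, fun _ => .empty⟩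
  simpa [Nat.add_sub_cancel' hMN] using hA.union empty_cover

theorem sigma {ι : Type} {A : ι → Type} [∀ i, TopologicalSpace (A i)] {N : ℕ}
    (h : ∀ i, HasAmenableCover (Set.univ : Set (A i)) N) :
    HasAmenableCover (Set.univ : Set (Σ i, A i)) N := by
  choose U U_open U_cover U_amenable using h
  refine ⟨fun b => {a | a.2 ∈ U a.1 b}, fun b => isOpen_sigma_iff.2 fun i => U_open i b,
    fun a _ => U_cover a.1 a.2 trivial, fun b => .sigma fun i => U_amenable i b⟩

theorem of_isQuotientMap {q : X → Y} (hq : Topology.IsQuotientMap q) {E : Set Y}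
    (hE : IsClosed E) (hinj : Set.InjOn q (q ⁻¹' Eᶜ)) {N : ℕ}
    (hX : HasAmenableCover (Set.univ : Set X) N) : HasAmenableCover Eᶜ N := by
  obtain ⟨U, U_open, U_cover, U_amenable⟩ := hX
  have emb : Topology.IsOpenEmbedding ((q ⁻¹' Eᶜ).domRestrict q) :=
    hE.isOpen_compl.isOpenEmbedding_subtypeVal.comp
      (isHomeomorph_iff_isQuotientMap_injective.2 ⟨hq.restrictPreimage_isOpen hE.isOpen_compl,
        fun a b h => Subtype.ext (hinj a.2 b.2 (congrArg Subtype.val h))⟩).isOpenEmbedding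
  have subset_emb (b) : Topology.IsEmbedding ((U b ∩ q ⁻¹' Eᶜ).domRestrict q) :=
    emb.isEmbedding.comp (.inclusion Set.inter_subset_right)
  refine ⟨fun b => q '' (U b ∩ q ⁻¹' Eᶜ), fun b => ?_, fun y hy => ?_, fun b => ?_⟩
  · have image_eq : q '' (U b ∩ q ⁻¹' Eᶜ) = (q ⁻¹' Eᶜ).domRestrict q '' (Subtype.val ⁻¹' U b) := by
      rw [Set.inter_comm, ← Subtype.image_preimage_val, Set.image_image]
      rfl
    simpa only [image_eq] using emb.isOpenMap _ ((U_open b).preimage continuous_subtype_val)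
  · obtain ⟨x, rfl⟩ := hq.surjective y
    obtain ⟨b, hb⟩ := U_cover x trivial
    exact ⟨b, x, ⟨hb, hy⟩, rfl⟩
  · exact ((U_amenable b).mono Set.inter_subset_left).image ⟨q, hq.continuous⟩ (subset_emb b)

end HasAmenableCover

theorem amCat_le_coe_iff {N : ℕ} : amCat Y ≤ N ↔ HasAmenableCover (Set.univ : Set Y) (N + 1) := by
  constructor
  · intro h
    obtain ⟨_, ⟨n, rfl, U, U_open, U_cover, U_amenable⟩, hn⟩ :=
      sInf_lt_iff.1 (h.trans_lt (ENat.natCast_lt_natCast.2 N.lt_succ_self))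
    exact HasAmenableCover.mono ⟨U, U_open, fun y _ => U_cover y, U_amenable⟩
      (ENat.natCast_lt_natCast.1 hn)
  · rintro ⟨U, U_open, U_cover, U_amenable⟩
    exact sInf_le ⟨N, rfl, U, U_open, fun y => U_cover y trivial, U_amenable⟩

theorem hasAmenableCover_of_amCat_add_one_le {N : ℕ} (h : amCat Y + 1 ≤ N) :
    HasAmenableCover (Set.univ : Set Y) N := by
  cases N with
  | zero => simp at h
  | succ N => exact amCat_le_coe_iff.1 (by simpa using h)

section Deformation

variable {X Y D P : Type*} [TopologicalSpace X] [TopologicalSpace Y] [TopologicalSpace D]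
  [TopologicalSpace P]

/-- Some homotopy from the identity of `X`, relative to `B`, pushes a neighbourhood of `A` into
`B`. In particular `DeformableInto B B` is a weak form of `B` being a neighbourhood deformation
retract of `X`. -/
def DeformableInto (A B : Set X) : Prop :=
  ∃ g : C(X, X), (ContinuousMap.id X).HomotopicRel g B ∧ ∀ᶠ x in 𝓝ˢ A, g x ∈ B

theorem homotopicRel_mono {f g : C(X, Y)} {S T : Set X}
    (h : f.HomotopicRel g T) (hST : S ⊆ T) : f.HomotopicRel g S :=
  h.map fun H => ⟨H.toHomotopy, fun t _ hx => H.prop t _ (hST hx)⟩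

namespace DeformableInto

theorem mono {A A' B : Set X} (h : DeformableInto A B) (hA : A' ⊆ A) : DeformableInto A' B :=
  let ⟨g, g_homotopic, g_mem⟩ := h
  ⟨g, g_homotopic, g_mem.filter_mono (nhdsSet_mono hA)⟩

protected theorem empty (B : Set X) : DeformableInto ∅ B :=
  ⟨.id X, .refl _, by simp⟩

theorem union {A₁ A₂ B : Set X} (h₁ : DeformableInto A₁ B) (h₂ : DeformableInto A₂ B)
    (hA₂ : A₂ ⊆ B) : DeformableInto (A₁ ∪ A₂) B := by
  obtain ⟨g₁, g₁_homotopic, g₁_mem⟩ := h₁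
  obtain ⟨g₂, g₂_homotopic, g₂_mem⟩ := h₂
  have g₁_fixed {x : X} (hx : x ∈ B) : g₁ x = x := (g₁_homotopic.fst_eq_snd hx).symm
  have g₂_fixed {x : X} (hx : x ∈ B) : g₂ x = x := (g₂_homotopic.fst_eq_snd hx).symm
  refine ⟨g₂.comp g₁, g₂_homotopic.trans (g₁_homotopic.comp_continuousMap g₂), ?_⟩
  rw [nhdsSet_union, Filter.eventually_sup]
  constructor
  · filter_upwards [g₁_mem] with x hx
    rwa [ContinuousMap.comp_apply, g₂_fixed hx]
  · have g₁_tendsto : Filter.Tendsto g₁ (𝓝ˢ A₂) (𝓝ˢ A₂) :=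
      g₁.continuous.tendsto_nhdsSet fun x hx => by rwa [g₁_fixed (hA₂ hx)]
    exact g₁_tendsto.eventually g₂_mem

theorem of_isCompact {B : Set X} (hB : IsCompact B) (h : ∀ x ∈ B, DeformableInto {x} B) :
    DeformableInto B B := by
  suffices DeformableInto (B ∩ B) B by rwa [Set.inter_self] at this
  refine hB.induction_on (p := fun A => DeformableInto (A ∩ B) B) ?_ ?_ ?_ fun x hx => ?_
  · simpa only [Set.empty_inter] using DeformableInto.empty B
  · exact fun A A' hA hA' => hA'.mono (Set.inter_subset_inter_left B hA)
  · intro A A' hA hA'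
    simpa only [Set.union_inter_distrib_right] using hA.union hA' Set.inter_subset_right
  · obtain ⟨g, g_homotopic, g_mem⟩ := h x hx
    obtain ⟨U, U_open, hxU, hU⟩ := eventually_nhdsSet_iff_exists.1 g_mem
    refine ⟨U, mem_nhdsWithin_of_mem_nhds (U_open.mem_nhds (hxU rfl)), g, g_homotopic, ?_⟩
    exact eventually_nhdsSet_iff_exists.2 ⟨U, U_open, Set.inter_subset_left, hU⟩

theorem of_mem_nhdsWithin {B T : Set X} {x : X} (h : DeformableInto {x} B) (hTB : T ⊆ B)
    (hx : x ∈ T) (hT : T ∈ 𝓝[B] x) : DeformableInto {x} T := by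
  obtain ⟨g, g_homotopic, g_mem⟩ := h
  refine ⟨g, homotopicRel_mono g_homotopic hTB, ?_⟩
  rw [nhdsSet_singleton] at g_mem ⊢
  have g_tendsto : Filter.Tendsto g (𝓝 x) (𝓝 x) := by
    simpa only [← g_homotopic.fst_eq_snd (hTB hx), ContinuousMap.id_apply] using
      g.continuous.tendsto x
  filter_upwards [g_mem, g_tendsto.eventually (mem_nhdsWithin_iff_eventually.1 hT)]
    with y hyB hyT using hyT hyB

end DeformableInto

theorem exists_homotopicRel_of_isQuotientMap {q : X → Y} (hq : Topology.IsQuotientMap q)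
    {T : Set X} (hT : ∀ a b, q a = q b → a = b ∨ a ∈ T ∧ b ∈ T) {g : C(X, X)}
    (hg : (ContinuousMap.id X).HomotopicRel g T) :
    ∃ g' : C(Y, Y), (ContinuousMap.id Y).HomotopicRel g' (q '' T) ∧ ∀ x, g' (q x) = q (g x) := by
  obtain ⟨H⟩ := hg
  have H_fixed (t) {x} (hx : x ∈ T) : H (t, x) = x := H.eq_fst t hx
  let F : unitInterval × Y → Y := fun p => q (H (p.1, Function.surjInv hq.surjective p.2))
  have F_apply (t x) : F (t, q x) = q (H (t, x)) := by
    rcases hT _ _ (Function.surjInv_eq hq.surjective (q x)) with h | ⟨h, hx⟩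
    · simp only [F, h]
    · simp only [F, H_fixed t h, H_fixed t hx, Function.surjInv_eq]
  have F_continuous : Continuous F := hq.continuous_lift_prod_right <| by
    simpa only [F_apply] using! hq.continuous.comp H.continuous
  refine ⟨⟨fun y => F (1, y), F_continuous.comp (.prodMk_right 1)⟩,
    ⟨⟨⟨⟨F, F_continuous⟩, ?_, fun _ => rfl⟩, ?_⟩⟩, ?_⟩
  · exact hq.surjective.forall.2 fun x => by simp [F_apply]
  · rintro t _ ⟨x, hx, rfl⟩
    simp [F_apply, H_fixed t hx]
  · intro x
    simp [F_apply]

theorem DeformableInto.image_isQuotientMap {q : X → Y} (hq : Topology.IsQuotientMap q) {T : Set X}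
    (hT : ∀ a b, q a = q b → a = b ∨ a ∈ T ∧ b ∈ T) (h : DeformableInto T T) :
    DeformableInto (q '' T) (q '' T) := by
  obtain ⟨g, g_homotopic, g_mem⟩ := h
  obtain ⟨g', g'_homotopic, g'_apply⟩ := exists_homotopicRel_of_isQuotientMap hq hT g_homotopic
  obtain ⟨U, U_open, hTU, hU⟩ := eventually_nhdsSet_iff_exists.1 g_mem
  have U_saturated : q ⁻¹' (q '' U) = U := by
    refine Set.Subset.antisymm ?_ (Set.subset_preimage_image q U)
    rintro a ⟨b, hb, hab⟩
    rcases hT b a hab with rfl | ⟨-, ha⟩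
    exacts [hb, hTU ha]
  refine ⟨g', g'_homotopic, eventually_nhdsSet_iff_exists.2 ⟨q '' U, ?_, Set.image_mono hTU, ?_⟩⟩
  · rwa [← hq.isOpen_preimage, U_saturated]
  · rintro _ ⟨x, hx, rfl⟩
    exact ⟨g x, hU x hx, (g'_apply x).symm⟩

theorem continuous_extend_id_of_isOpenEmbedding [T2Space X] {i : D → X}
    (hi : Topology.IsOpenEmbedding i) {K : Set D} (hK : IsCompact K) {F : P × D → X}
    (hF : Continuous F) (hFK : ∀ t, ∀ w ∉ K, F (t, w) = i w) :
    Continuous fun p : P × X => Function.extend i (fun w => F (p.1, w)) id p.2 := by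
  refine continuous_iff_continuousAt.2 fun ⟨t, x⟩ => ?_
  by_cases hx : x ∈ Set.range i
  · obtain ⟨w, rfl⟩ := hx
    refine (Topology.IsOpenEmbedding.id.prodMap hi).continuousAt_iff (x := (t, w)) |>.1 ?_
    simpa only [Function.comp_def, Prod.map, id, hi.injective.extend_apply] using hF.continuousAt
  · have hxK : x ∉ i '' K := fun h => hx (Set.image_subset_range i K h)
    have nhd : ∀ᶠ p : P × X in 𝓝 (t, x), p.2 ∉ i '' K :=
      ((hK.image hi.continuous).isClosed.isOpen_compl.preimage continuous_snd).mem_nhds hxK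
    refine continuousAt_snd.congr (nhd.mono fun ⟨s, y⟩ hy => ?_)
    by_cases hyi : ∃ w, i w = y
    · obtain ⟨w, rfl⟩ := hyi
      simp [hi.injective.extend_apply, hFK s w fun hw => hy ⟨w, hw, rfl⟩]
    · simp [Function.extend_apply' _ _ _ hyi]

theorem exists_homotopicRel_of_isOpenEmbedding [T2Space X] {i : D → X}
    (hi : Topology.IsOpenEmbedding i) {K : Set D} (hK : IsCompact K) {B : Set X} {g : C(D, D)}
    (hg : (ContinuousMap.id D).HomotopicRel g (i ⁻¹' B ∪ Kᶜ)) :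
    ∃ g' : C(X, X), (ContinuousMap.id X).HomotopicRel g' B ∧ ∀ w, g' (i w) = i (g w) := by
  obtain ⟨H⟩ := hg
  let F : unitInterval × X → X := fun p => Function.extend i (fun w => i (H (p.1, w))) id p.2
  have F_apply (t w) : F (t, i w) = i (H (t, w)) := hi.injective.extend_apply ..
  have F_outside (t) {x} (hx : ¬∃ w, i w = x) : F (t, x) = x := Function.extend_apply' _ _ _ hx
  have F_continuous : Continuous F :=
    continuous_extend_id_of_isOpenEmbedding hi hK (hi.continuous.comp H.continuous)
      fun t w hw => congrArg i (H.eq_fst t (.inr hw))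
  refine ⟨⟨fun x => F (1, x), F_continuous.comp (.prodMk_right 1)⟩,
    ⟨⟨⟨⟨F, F_continuous⟩, fun x => ?_, fun _ => rfl⟩, fun t x hx => ?_⟩⟩, fun w => ?_⟩
  · by_cases hxi : ∃ w, i w = x
    · obtain ⟨w, rfl⟩ := hxi
      simp [F_apply]
    · exact F_outside 0 hxi
  · by_cases hxi : ∃ w, i w = x
    · obtain ⟨w, rfl⟩ := hxi
      simp [F_apply, H.eq_fst t (.inl hx)]
    · exact F_outside t hxi
  · simp [F_apply]

theorem DeformableInto.image_isOpenEmbedding [T2Space X] [CompactSpace D] {i : D → X}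
    (hi : Topology.IsOpenEmbedding i) {A : Set D} {B : Set X} (h : DeformableInto A (i ⁻¹' B)) :
    DeformableInto (i '' A) B := by
  obtain ⟨g, g_homotopic, g_mem⟩ := h
  obtain ⟨g', g'_homotopic, g'_apply⟩ := exists_homotopicRel_of_isOpenEmbedding hi isCompact_univ
    (by simpa only [Set.compl_univ, Set.union_empty] using g_homotopic)
  obtain ⟨U, U_open, hAU, hU⟩ := eventually_nhdsSet_iff_exists.1 g_mem
  refine ⟨g', g'_homotopic, eventually_nhdsSet_iff_exists.2
    ⟨i '' U, hi.isOpenMap U U_open, Set.image_mono hAU, ?_⟩⟩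
  rintro _ ⟨w, hw, rfl⟩
  rw [g'_apply]
  exact hU w hw

end Deformation

theorem HasAmenableCover.of_deformableInto {e : C(X, Y)} (he : Topology.IsEmbedding e) {A : Set Y}
    (hA : DeformableInto A (Set.range e)) {N : ℕ}
    (hX : HasAmenableCover (Set.univ : Set X) N) : HasAmenableCover A N := by
  obtain ⟨g, g_homotopic, g_mem⟩ := hA
  obtain ⟨V, V_open, V_cover, V_amenable⟩ := hX
  choose O O_open O_eq using fun b => he.isOpen_iff.1 (V_open b)
  refine ⟨fun b => interior (g ⁻¹' Set.range e) ∩ g ⁻¹' O b,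
    fun b => isOpen_interior.inter ((O_open b).preimage g.continuous), fun y hy => ?_, fun b => ?_⟩
  · have y_mem : y ∈ interior (g ⁻¹' Set.range e) := subset_interior_iff_mem_nhdsSet.2 g_mem hy
    obtain ⟨x, hx⟩ : g y ∈ Set.range e := interior_subset (s := g ⁻¹' Set.range e) y_mem
    obtain ⟨b, hb⟩ := V_cover x trivial
    refine ⟨b, y_mem, ?_⟩
    rwa [Set.mem_preimage, ← hx, ← Set.mem_preimage, O_eq]
  · have V_image : AmenableCoverCondition (e '' V b) :=
      (V_amenable b).image e (he.comp .subtypeVal)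
    refine V_image.of_homotopic_id g_homotopic.homotopic ?_
    rintro y ⟨hy, hyO⟩
    obtain ⟨x, hx⟩ : g y ∈ Set.range e := interior_subset (s := g ⁻¹' Set.range e) hy
    exact ⟨x, by rwa [← O_eq, Set.mem_preimage, hx], hx⟩

section HalfBall

variable {n : ℕ}

/-- The part of the sup-norm ball of radius `ε` about `v` on which the `k`-th coordinate is
nonnegative. -/
def halfBall (k : Fin n) (v : Fin n → ℝ) (ε : ℝ) : Set (Fin n → ℝ) :=
  {w ∈ Metric.ball v ε | 0 ≤ w k}

variable {k : Fin n} {v w : Fin n → ℝ} {ε s : ℝ}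

theorem update_mul_mem_halfBall (hv : v k = 0) (hw : w ∈ halfBall k v ε)
    (hs : s ∈ Set.Icc (0 : ℝ) 1) : Function.update w k (s * w k) ∈ halfBall k v ε := by
  refine ⟨lt_of_le_of_lt ((dist_pi_le_iff dist_nonneg).2 fun j => ?_) hw.1, ?_⟩
  · refine le_trans ?_ (dist_le_pi_dist w v j)
    obtain rfl | hj := eq_or_ne j k
    · rw [Function.update_self, hv, dist_zero_right, dist_zero_right, norm_mul,
        Real.norm_of_nonneg hs.1]
      exact mul_le_of_le_one_left (norm_nonneg _) hs.2
    · rw [Function.update_of_ne hj]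
  · rw [Function.update_self]
    exact mul_nonneg hs.1 hw.2

theorem isCompact_dist_le_halfBall {r : ℝ} (hr : r < ε) :
    IsCompact {w : halfBall k v ε | dist w.1 v ≤ r} := by
  have ambient_compact : IsCompact (Metric.closedBall v r ∩ {w | 0 ≤ w k}) :=
    (isCompact_closedBall v r).inter_right (isClosed_le continuous_const (continuous_apply k))
  have subset_range : Metric.closedBall v r ∩ {w | 0 ≤ w k} ⊆
      Set.range (Subtype.val : halfBall k v ε → Fin n → ℝ) := by
    rintro w ⟨hwr, hwk⟩
    exact ⟨⟨w, Metric.closedBall_subset_ball hr hwr, hwk⟩, rfl⟩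
  convert Topology.IsInducing.subtypeVal.isCompact_preimage' ambient_compact subset_range using 1
  ext w
  exact ⟨fun h => ⟨h, w.2.2⟩, fun h => h.1⟩

theorem exists_homotopicRel_halfBall (hv : v k = 0) (hε : 0 < ε) :
    ∃ g : C(halfBall k v ε, halfBall k v ε),
      (ContinuousMap.id _).HomotopicRel g ({w | w.1 k = 0} ∪ {w | dist w.1 v ≤ ε / 2}ᶜ) ∧
      ∀ w, dist w.1 v ≤ ε / 3 → (g w).1 k = 0 := by
  let χ : ContDiffBump v := ⟨ε / 3, ε / 2, by positivity, by linarith⟩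
  let scale : unitInterval × halfBall k v ε → ℝ := fun p => 1 - p.1 * χ p.2
  have scale_mem (p) : scale p ∈ Set.Icc (0 : ℝ) 1 := by
    have upper : (p.1 : ℝ) * χ p.2 ≤ 1 := mul_le_one₀ p.1.2.2 χ.nonneg χ.le_one
    have lower : 0 ≤ (p.1 : ℝ) * χ p.2 := mul_nonneg p.1.2.1 χ.nonneg
    exact ⟨sub_nonneg.2 upper, sub_le_self 1 lower⟩
  have scale_continuous : Continuous scale :=
    continuous_const.sub ((continuous_subtype_val.comp continuous_fst).mul
      (χ.continuous.comp (continuous_subtype_val.comp continuous_snd)))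
  let F : C(unitInterval × halfBall k v ε, halfBall k v ε) :=
    ⟨fun p => ⟨Function.update p.2.1 k (scale p * p.2.1 k),
      update_mul_mem_halfBall hv p.2.2 (scale_mem p)⟩,
      Continuous.subtype_mk (.update (by fun_prop) k (scale_continuous.mul
        ((continuous_apply k).comp (continuous_subtype_val.comp continuous_snd)))) _⟩
  have F_fixed (p) (h : scale p = 1 ∨ p.2.1 k = 0) : F p = p.2 := by
    refine Subtype.ext (Function.update_eq_self_iff.2 ?_)
    rcases h with h | h <;> simp [h]
  refine ⟨⟨fun w => F (1, w), by fun_prop⟩, ⟨⟨⟨F, fun w => ?_, fun _ => rfl⟩, ?_⟩⟩, fun w hw => ?_⟩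
  · exact F_fixed _ (.inl (by simp [scale]))
  · rintro t w (hw | hw)
    · exact F_fixed _ (.inr hw)
    · have χ_eq : χ w.1 = 0 := χ.zero_of_le_dist (not_le.1 (Set.notMem_ofPred_iff.1 hw)).le
      exact F_fixed _ (.inl (by simp [scale, χ_eq]))
  · have χ_eq : χ w.1 = 1 := χ.one_of_mem_closedBall hw
    simp [F, scale, χ_eq]

theorem isPreconnected_halfBall_face : _root_.IsPreconnected {w : halfBall k v ε | w.1 k = 0} := by
  rw [← Topology.IsInducing.subtypeVal.isPreconnected_image]
  have face_convex : Convex ℝ (Metric.ball v ε ∩ {w | w k = 0}) :=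
    (convex_ball v ε).inter (convex_hyperplane (LinearMap.proj k).isLinear 0)
  convert face_convex.isPreconnected using 1
  ext w
  constructor
  · rintro ⟨w, hw, rfl⟩
    exact ⟨w.2.1, hw⟩
  · rintro ⟨hw, hwk⟩
    exact ⟨⟨w, hw, hwk.ge⟩, hwk, rfl⟩

/-- A parametrization of a neighbourhood of the point `x` of `B` by a half-ball whose flat face
corresponds to `B`. -/
structure HalfBallChart {X : Type*} [TopologicalSpace X] (n : ℕ) (B : Set X) (x : X) where
  coord : Fin n
  center : Fin n → ℝ
  radius : ℝ
  center_coord : center coord = 0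
  radius_pos : 0 < radius
  toFun : halfBall coord center radius → X
  isOpenEmbedding : Topology.IsOpenEmbedding toFun
  map_center : toFun ⟨center, Metric.mem_ball_self radius_pos, center_coord.ge⟩ = x
  map_mem_iff : ∀ w, toFun w ∈ B ↔ w.1 coord = 0

namespace HalfBallChart

variable {X : Type*} [TopologicalSpace X] {B : Set X} {x : X} (c : HalfBallChart n B x)
include c

theorem deformableInto [T2Space X] : DeformableInto {x} B := by
  obtain ⟨g, g_homotopic, g_mem⟩ := exists_homotopicRel_halfBall c.center_coord c.radius_pos
  have face_eq : {w | w.1 c.coord = 0} = c.toFun ⁻¹' B := Set.ext fun w => (c.map_mem_iff w).symm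
  rw [face_eq] at g_homotopic
  obtain ⟨g', g'_homotopic, g'_apply⟩ := exists_homotopicRel_of_isOpenEmbedding c.isOpenEmbedding
    (isCompact_dist_le_halfBall (half_lt_self c.radius_pos)) g_homotopic
  refine ⟨g', g'_homotopic, ?_⟩
  rw [nhdsSet_singleton, ← c.map_center, ← c.isOpenEmbedding.map_nhds_eq, Filter.eventually_map]
  have near_center := Metric.closedBall_mem_nhds
    (⟨c.center, Metric.mem_ball_self c.radius_pos, c.center_coord.ge⟩ :
      halfBall c.coord c.center c.radius) (div_pos c.radius_pos three_pos)
  filter_upwards [near_center] with w hw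
  rw [g'_apply, c.map_mem_iff]
  exact g_mem w hw

theorem connectedComponentIn_mem_nhdsWithin : connectedComponentIn B x ∈ 𝓝[B] x := by
  have face_subset : c.toFun '' {w | w.1 c.coord = 0} ⊆ connectedComponentIn B x :=
    (isPreconnected_halfBall_face.image _ c.isOpenEmbedding.continuous.continuousOn)
      |>.subset_connectedComponentIn ⟨_, c.center_coord, c.map_center⟩
        (Set.image_subset_iff.2 fun w hw => (c.map_mem_iff w).2 hw)
  have range_mem : Set.range c.toFun ∈ 𝓝 x :=
    c.isOpenEmbedding.isOpen_range.mem_nhds ⟨_, c.map_center⟩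
  filter_upwards [mem_nhdsWithin_of_mem_nhds range_mem, self_mem_nhdsWithin]
  rintro _ ⟨w, rfl⟩ hw
  exact face_subset ⟨w, (c.map_mem_iff w).1 hw, rfl⟩

end HalfBallChart

end HalfBall

section OCCManifold

attribute [local instance] OCCManifold.t2 OCCManifold.compact

variable {n : ℕ} {M : OCCManifold n} {S : Set M.carrier} {x : M.carrier}

namespace OCCManifold

theorem nonempty_halfBallChart (hx : x ∈ M.boundary) :
    Nonempty (HalfBallChart n M.boundary x) := by
  obtain ⟨U, V, φ, hxU, hU, hV, φ_boundary⟩ := M.charts x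
  obtain ⟨hn, center_coord⟩ := (φ_boundary ⟨x, hxU⟩).1 hx
  obtain ⟨ε, hε, ball_subset⟩ := Metric.isOpen_iff.1 hV _ (φ ⟨x, hxU⟩).2
  set v : HalfSpace n := (φ ⟨x, hxU⟩).1
  let ι : halfBall ⟨0, hn⟩ v.1 ε → V := fun w => ⟨⟨w, fun _ => w.2.2⟩, ball_subset w.2.1⟩
  have ι_range : Set.range ι = {u | dist u.1 v < ε} := by
    refine Set.Subset.antisymm (Set.range_subset_iff.2 fun w => w.2.1) fun u hu => ?_
    exact ⟨⟨u, hu, u.1.2 hn⟩, rfl⟩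
  have ι_embedding : Topology.IsOpenEmbedding ι := by
    refine ⟨.of_comp (by fun_prop) (continuous_subtype_val.comp continuous_subtype_val)
      Topology.IsEmbedding.subtypeVal, ?_⟩
    rw [ι_range]
    exact isOpen_lt (by fun_prop) continuous_const
  exact ⟨{
    coord := ⟨0, hn⟩
    center := v
    radius := ε
    center_coord
    radius_pos := hε
    toFun := fun w => φ.symm (ι w)
    isOpenEmbedding := hU.isOpenEmbedding_subtypeVal.comp (φ.symm.isOpenEmbedding.comp ι_embedding)
    map_center := congrArg Subtype.val (φ.symm_apply_apply ⟨x, hxU⟩)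
    map_mem_iff := fun w => by
      rw [φ_boundary, φ.apply_symm_apply]
      exact ⟨fun ⟨_, h⟩ => h, fun h => ⟨hn, h⟩⟩ }⟩

theorem isClosed_boundary (M : OCCManifold n) : IsClosed M.boundary := by
  rw [← isOpen_compl_iff, isOpen_iff_mem_nhds]
  intro x hx
  obtain ⟨U, V, φ, hxU, hU, -, φ_boundary⟩ := M.charts x
  have model_closed : IsClosed (HalfSpaceBoundary n) := by
    simp only [HalfSpaceBoundary, Set.ofPred_exists]
    exact isClosed_iUnion_of_finite fun h => isClosed_eq (continuous_apply _) continuous_const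
  have preimage_closed : IsClosed (Subtype.val ⁻¹' M.boundary : Set U) := by
    have preimage_eq : (Subtype.val ⁻¹' M.boundary : Set U) =
      (fun u => ((φ u).1 : Fin n → ℝ)) ⁻¹' HalfSpaceBoundary n := Set.ext φ_boundary
    rw [preimage_eq]
    exact model_closed.preimage (by fun_prop)
  have complement_open := hU.isOpenMap_subtype_val _ preimage_closed.isOpen_compl
  refine Filter.mem_of_superset (complement_open.mem_nhds ⟨⟨x, hxU⟩, hx, rfl⟩) ?_
  rintro _ ⟨u, hu, rfl⟩
  exact hu

end OCCManifold

namespace IsBoundaryComponent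

theorem eq_connectedComponentIn (hS : IsBoundaryComponent M S) (hx : x ∈ S) :
    S = connectedComponentIn M.boundary x := by
  obtain ⟨y, -, rfl⟩ := hS
  exact connectedComponentIn_eq hx

theorem subset_boundary (hS : IsBoundaryComponent M S) : S ⊆ M.boundary := by
  obtain ⟨y, -, rfl⟩ := hS
  exact connectedComponentIn_subset _ _

protected theorem isClosed (hS : IsBoundaryComponent M S) : IsClosed S := by
  obtain ⟨y, hy, rfl⟩ := hS
  rw [connectedComponentIn_eq_image hy]
  exact M.isClosed_boundary.isClosedMap_subtype_val _ isClosed_connectedComponent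

theorem deformableInto (hS : IsBoundaryComponent M S) (hx : x ∈ S) {T : Set M.carrier}
    (hST : S ⊆ T) (hT : T ⊆ M.boundary) : DeformableInto {x} T := by
  obtain ⟨c⟩ := M.nonempty_halfBallChart (hS.subset_boundary hx)
  have S_mem : S ∈ 𝓝[M.boundary] x :=
    hS.eq_connectedComponentIn hx ▸ c.connectedComponentIn_mem_nhdsWithin
  exact c.deformableInto.of_mem_nhdsWithin hT (hST hx) (Filter.mem_of_superset S_mem hST)

end IsBoundaryComponent

end OCCManifold

namespace GluingSetup

attribute [local instance] OCCManifold.t2 OCCManifold.compact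

variable {n k l : ℕ} (S : GluingSetup n k l)

/-- The disjoint union of the pieces. -/
abbrev Pieces : Type := Σ j, (S.pieces j).carrier

/-- The disjoint union of the boundary components `Sᵢ⁺`. -/
abbrev PlusSides : Type := Σ i, S.Sp i

/-- The quotient map from the disjoint union of the pieces to the glued manifold. -/
def proj (p : S.Pieces) : S.glued.carrier := S.emb p.1 p.2

/-- The inclusion of the boundary components `Sᵢ⁺` into the pieces. -/
def plusSide (s : S.PlusSides) : S.Pieces := ⟨S.jp s.1, s.2⟩

/-- The boundary components `Sᵢ⁻` in the pieces, parametrized by their partners `Sᵢ⁺` through the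
gluing homeomorphisms. -/
def minusSide (s : S.PlusSides) : S.Pieces := ⟨S.jm s.1, S.glueHomeo s.1 s.2⟩

/-- The part of the disjoint union of the pieces along which the gluing takes place: all
boundary components `Sᵢ⁺` and `Sᵢ⁻`. -/
def locus : Set S.Pieces := Set.range S.plusSide ∪ Set.range S.minusSide

theorem isQuotientMap_proj : Topology.IsQuotientMap S.proj := S.quotient

theorem continuous_plusSide : Continuous S.plusSide :=
  continuous_sigma fun _ =>
    (continuous_sigmaMk (σ := fun j => (S.pieces j).carrier)).comp continuous_subtype_val

theorem continuous_minusSide : Continuous S.minusSide :=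
  continuous_sigma fun i =>
    (continuous_sigmaMk (σ := fun j => (S.pieces j).carrier)).comp
      (continuous_subtype_val.comp (S.glueHomeo i).continuous)

theorem compactSpace_plusSides : CompactSpace S.PlusSides :=
  have (i : Fin l) : CompactSpace (S.Sp i) :=
    isCompact_iff_compactSpace.1 (S.Sp_comp i).isClosed.isCompact
  inferInstance

theorem injective_sumElim_sides : Function.Injective (Sum.elim S.plusSide S.minusSide) := by
  let component (p : S.Pieces) : Σ j, Set (S.pieces j).carrier :=
    ⟨p.1, connectedComponentIn (S.pieces p.1).boundary p.2⟩
  have component_plus (s) : component (S.plusSide s) = ⟨S.jp s.1, S.Sp s.1⟩ :=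
    Sigma.ext rfl (heq_of_eq ((S.Sp_comp s.1).eq_connectedComponentIn s.2.2).symm)
  have component_minus (s) : component (S.minusSide s) = ⟨S.jm s.1, S.Sm s.1⟩ :=
    Sigma.ext rfl
      (heq_of_eq ((S.Sm_comp s.1).eq_connectedComponentIn (S.glueHomeo s.1 s.2).2).symm)
  have label_eq {z w} (h : Sum.elim S.plusSide S.minusSide z = Sum.elim S.plusSide S.minusSide w) :
      z.map Sigma.fst Sigma.fst = w.map Sigma.fst Sigma.fst := by
    refine S.distinct ?_
    replace h := congrArg component h
    rcases z with z | z <;> rcases w with w | w <;>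
      simpa only [Sum.elim_inl, Sum.elim_inr, Sum.map_inl, Sum.map_inr, component_plus,
        component_minus] using h
  rintro (⟨i, x⟩ | ⟨i, x⟩) (⟨i', x'⟩ | ⟨i', x'⟩) h <;> have label := label_eq h
  · obtain rfl : i = i' := Sum.inl_injective label
    obtain rfl : x = x' := Subtype.ext (sigma_mk_injective (β := fun j => (S.pieces j).carrier) h)
    rfl
  · exact (Sum.inl_ne_inr label).elim
  · exact (Sum.inr_ne_inl label).elim
  · obtain rfl : i = i' := Sum.inr_injective label
    obtain rfl : x = x' := (S.glueHomeo i).injective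
      (Subtype.ext (sigma_mk_injective (β := fun j => (S.pieces j).carrier) h))
    rfl

theorem proj_eq_proj_iff {p p' : S.Pieces} :
    S.proj p = S.proj p' ↔
      Relation.EqvGen (fun p p' => ∃ s, p = S.plusSide s ∧ p' = S.minusSide s) p p' := by
  simp only [Sigma.exists]
  exact S.identifications p p'

theorem proj_minusSide (s : S.PlusSides) : S.proj (S.minusSide s) = S.proj (S.plusSide s) :=
  (S.proj_eq_proj_iff.2 (.rel _ _ ⟨s, rfl, rfl⟩)).symm

theorem proj_eq_proj {p p' : S.Pieces} (h : S.proj p = S.proj p') :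
    p = p' ∨ p ∈ S.locus ∧ p' ∈ S.locus := by
  replace h := S.proj_eq_proj_iff.1 h
  induction h with
  | rel _ _ h =>
    obtain ⟨s, rfl, rfl⟩ := h
    exact .inr ⟨.inl ⟨s, rfl⟩, .inr ⟨s, rfl⟩⟩
  | refl => exact .inl rfl
  | symm => grind
  | trans => grind

theorem injective_proj_plusSide : Function.Injective (S.proj ∘ S.plusSide) := by
  obtain ⟨plus_injective, minus_injective, plus_ne_minus⟩ :=
    Sum.elim_injective.1 S.injective_sumElim_sides
  let fold : S.Pieces → S.Pieces := Function.extend S.minusSide S.plusSide id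
  have fold_plus (s) : fold (S.plusSide s) = S.plusSide s :=
    Function.extend_apply' _ _ _ fun ⟨t, ht⟩ => plus_ne_minus s t ht.symm
  have fold_minus (s) : fold (S.minusSide s) = S.plusSide s := minus_injective.extend_apply _ _ s
  have fold_congr {p p'} (h : S.proj p = S.proj p') : fold p = fold p' := by
    refine Setoid.eqvGen_le (s := Setoid.ker fold) ?_ (S.proj_eq_proj_iff.1 h)
    rintro _ _ ⟨s, rfl, rfl⟩
    exact (fold_plus s).trans (fold_minus s).symm
  intro s t h
  exact plus_injective (by simpa only [fold_plus] using fold_congr h)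

/-- The hypersurface along which the pieces meet in the glued manifold, as the image of the
boundary components `Sᵢ⁺`. -/
def hypersurface : C(S.PlusSides, S.glued.carrier) :=
  ⟨S.proj ∘ S.plusSide, S.isQuotientMap_proj.continuous.comp S.continuous_plusSide⟩

theorem isClosedEmbedding_hypersurface : Topology.IsClosedEmbedding S.hypersurface :=
  have := S.compactSpace_plusSides
  S.hypersurface.continuous.isClosedEmbedding S.injective_proj_plusSide

theorem image_proj_locus : S.proj '' S.locus = Set.range S.hypersurface := by
  have range_minus : Set.range (S.proj ∘ S.minusSide) = Set.range (S.proj ∘ S.plusSide) :=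
    congrArg Set.range (funext S.proj_minusSide)
  rw [locus, Set.image_union, ← Set.range_comp, ← Set.range_comp, range_minus, Set.union_self]
  rfl

theorem isCompact_locus : IsCompact S.locus :=
  have := S.compactSpace_plusSides
  (isCompact_range S.continuous_plusSide).union (isCompact_range S.continuous_minusSide)

theorem mem_boundary_of_mem_locus {p : S.Pieces} (hp : p ∈ S.locus) :
    p.2 ∈ (S.pieces p.1).boundary := by
  rcases hp with ⟨⟨i, x⟩, rfl⟩ | ⟨⟨i, x⟩, rfl⟩
  · exact (S.Sp_comp i).subset_boundary x.2
  · exact (S.Sm_comp i).subset_boundary (S.glueHomeo i x).2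

theorem deformableInto_locus : DeformableInto S.locus S.locus := by
  have component_deformable {j} {C : Set (S.pieces j).carrier}
      (hC : IsBoundaryComponent (S.pieces j) C) (hCT : ∀ x ∈ C, (⟨j, x⟩ : S.Pieces) ∈ S.locus) {x}
      (hx : x ∈ C) : DeformableInto {(⟨j, x⟩ : S.Pieces)} S.locus := by
    rw [← Set.image_singleton]
    exact (hC.deformableInto hx hCT fun y hy => S.mem_boundary_of_mem_locus hy)
      |>.image_isOpenEmbedding Topology.IsOpenEmbedding.sigmaMk
  refine .of_isCompact S.isCompact_locus ?_
  rintro _ (⟨⟨i, x⟩, rfl⟩ | ⟨⟨i, x⟩, rfl⟩)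
  · exact component_deformable (S.Sp_comp i) (fun x hx => .inl ⟨⟨i, x, hx⟩, rfl⟩) x.2
  · refine component_deformable (S.Sm_comp i) (fun y hy => .inr ?_) (S.glueHomeo i x).2
    exact ⟨⟨i, (S.glueHomeo i).symm ⟨y, hy⟩⟩, by simp [minusSide]⟩

theorem deformableInto_hypersurface :
    DeformableInto (Set.range S.hypersurface) (Set.range S.hypersurface) := by
  simpa only [image_proj_locus] using
    S.deformableInto_locus.image_isQuotientMap S.isQuotientMap_proj fun _ _ => S.proj_eq_proj

theorem hasAmenableCover_hypersurface {N : ℕ} (h : ∀ i, amCat (S.Sp i) + 1 ≤ N) :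
    HasAmenableCover (Set.range S.hypersurface) N :=
  .of_deformableInto S.isClosedEmbedding_hypersurface.isEmbedding S.deformableInto_hypersurface
    (.sigma fun i => hasAmenableCover_of_amCat_add_one_le (h i))

theorem hasAmenableCover_compl_hypersurface {N : ℕ} (h : ∀ j, amCat (S.pieces j).carrier ≤ N) :
    HasAmenableCover (Set.range S.hypersurface)ᶜ (N + 1) := by
  refine .of_isQuotientMap S.isQuotientMap_proj S.isClosedEmbedding_hypersurface.isClosed_range ?_
    (.sigma fun j => amCat_le_coe_iff.1 (h j))
  intro p hp p' _ hpp'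
  refine (S.proj_eq_proj hpp').resolve_right fun hlocus => hp ?_
  exact S.image_proj_locus ▸ Set.mem_image_of_mem _ hlocus.1

end GluingSetup

theorem amCat_gluing_sum_general (n k l : ℕ) (S : GluingSetup n k l) :
    amCat S.glued.carrier ≤
      (⨆ j : Fin k, amCat (S.pieces j).carrier) + ⨆ i : Fin l, (amCat (S.Sp i) + 1) := by
  cases hm : ⨆ j : Fin k, amCat (S.pieces j).carrier with
  | top => simp
  | coe m =>
    cases hs : ⨆ i : Fin l, (amCat (S.Sp i) + 1) with
    | top => simp
    | coe s =>
      have complement_cover := S.hasAmenableCover_compl_hypersurface (iSup_le_iff.1 hm.le)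
      have hypersurface_cover := S.hasAmenableCover_hypersurface (iSup_le_iff.1 hs.le)
      have cover := complement_cover.union hypersurface_cover
      rw [Set.compl_union_self, add_right_comm] at cover
      exact_mod_cast amCat_le_coe_iff.2 cover

/-- **Amenable category of gluings (sum version).**
In the gluing setup, suppose the glued boundary components are `π₁`-injective in their pieces.
Then `cat_Am(M) ≤ max_j cat_Am(M_j) + max_i (cat_Am(Sᵢ⁺) + 1)`. -/
theorem amCat_gluing_sum (n k l : ℕ) (S : GluingSetup n k l)
    (h1p : ∀ i, Pi1Injective (S.Sp i)) (h1m : ∀ i, Pi1Injective (S.Sm i)) :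
    amCat S.glued.carrier ≤
      (⨆ j : Fin k, amCat (S.pieces j).carrier) + ⨆ i : Fin l, (amCat (S.Sp i) + 1) :=
  amCat_gluing_sum_general n k l S

end
end
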